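/- arXiv:1805.02871 — 2 statements merged into one kernel-verified Lean document; each statement's English description precedes it below -/
import Mathlib

section
/- Let x_1, …, x_m be complex-valued random variables on a common probability space with |x_i| ≤ C almost surely for every i, where C ≥ 0. Then Var(x_1 x_2 ⋯ x_m) ≤ m · C^{2(m−1)} · (Var(x_1) + Var(x_2) + ⋯ + Var(x_m)). -/
/-!
The mean minimises the mean square distance: `E|z - c|² = Var(z) + |E z - c|²` for every constant
`c` (`integral_norm_sub_sq`). Hence, with `μᵢ = E xᵢ`, the variance of `∏ xᵢ` is at most
`E|∏ xᵢ - ∏ μᵢ|²`. Since `|xᵢ| ≤ C` and `|μᵢ| ≤ C`, telescoping the difference of products gives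
`|∏ xᵢ - ∏ μᵢ| ≤ C^(m-1) ∑ |xᵢ - μᵢ|` (`norm_prod_sub_prod_le_pow`). Squaring, applying
Cauchy–Schwarz to the sum, and using `E|xᵢ - μᵢ|² = Var(xᵢ)` finishes the proof.
-/

open MeasureTheory ProbabilityTheory

/-- Variance of a complex-valued random variable: `Var(z) = E[|z|²] − |E[z]|²`. -/
noncomputable def cvar {Ω : Type*} [MeasurableSpace Ω] (P : Measure Ω) (z : Ω → ℂ) : ℝ :=
  (∫ ω, ‖z ω‖ ^ 2 ∂P) - ‖∫ ω, z ω ∂P‖ ^ 2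

/-- Telescoping bound: replacing the factors `a i` by `b i` one at a time leaves at each step
`s.card - 1` other factors, each of norm at most `C`. -/
theorem norm_prod_sub_prod_le_pow {ι : Type*} (s : Finset ι) (C : ℝ) (hC : 0 ≤ C) (a b : ι → ℂ)
    (ha : ∀ i, ‖a i‖ ≤ C) (hb : ∀ i, ‖b i‖ ≤ C) :
    ‖∏ i ∈ s, a i - ∏ i ∈ s, b i‖ ≤ C ^ (s.card - 1) * ∑ i ∈ s, ‖a i - b i‖ := by
  classical
  induction s using Finset.induction_on with
  | empty => simp
  | insert j s hj ih =>
    rw [Finset.prod_insert hj, Finset.prod_insert hj, Finset.sum_insert hj,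
      Finset.card_insert_of_notMem hj, Nat.add_sub_cancel]
    have hA : ‖∏ i ∈ s, a i‖ ≤ C ^ s.card := by
      rw [norm_prod]
      simpa using Finset.prod_le_prod (s := s) (fun i _ => norm_nonneg (a i)) fun i _ => ha i
    -- For empty `s` the sum vanishes, so the truncated exponent `s.card - 1` does no harm.
    have hpow : C * (C ^ (s.card - 1) * ∑ i ∈ s, ‖a i - b i‖)
        = C ^ s.card * ∑ i ∈ s, ‖a i - b i‖ := by
      rcases s.eq_empty_or_nonempty with rfl | hs
      · simp
      · rw [← mul_assoc, mul_pow_sub_one hs.card_pos.ne']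
    calc ‖a j * ∏ i ∈ s, a i - b j * ∏ i ∈ s, b i‖
        = ‖(a j - b j) * ∏ i ∈ s, a i + b j * (∏ i ∈ s, a i - ∏ i ∈ s, b i)‖ := by
          congr 1; ring
      _ ≤ ‖a j - b j‖ * ‖∏ i ∈ s, a i‖ + ‖b j‖ * ‖∏ i ∈ s, a i - ∏ i ∈ s, b i‖ := by
          rw [← norm_mul, ← norm_mul]; exact norm_add_le _ _
      _ ≤ ‖a j - b j‖ * C ^ s.card + C * (C ^ (s.card - 1) * ∑ i ∈ s, ‖a i - b i‖) := by
          gcongr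
          exact hb j
      _ = C ^ s.card * (‖a j - b j‖ + ∑ i ∈ s, ‖a i - b i‖) := by
          rw [hpow]; ring

theorem integrable_norm_sq {Ω : Type*} [MeasurableSpace Ω] {P : Measure Ω} [IsProbabilityMeasure P]
    {z : Ω → ℂ} (hz : Measurable z) {K : ℝ} (hK : ∀ᵐ ω ∂P, ‖z ω‖ ≤ K) :
    Integrable (fun ω => ‖z ω‖ ^ 2) P := by
  refine Integrable.of_bound (by fun_prop) (K ^ 2) ?_
  filter_upwards [hK] with ω h
  rw [Real.norm_of_nonneg (by positivity)]
  gcongr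

/-- Decomposition of the mean square distance to `c` into variance and squared bias. -/
theorem integral_norm_sub_sq {Ω : Type*} [MeasurableSpace Ω] {P : Measure Ω}
    [IsProbabilityMeasure P] {z : Ω → ℂ} (hz : Measurable z) {K : ℝ}
    (hK : ∀ᵐ ω ∂P, ‖z ω‖ ≤ K) (c : ℂ) :
    ∫ ω, ‖z ω - c‖ ^ 2 ∂P = cvar P z + ‖∫ ω, z ω ∂P - c‖ ^ 2 := by
  have hzi : Integrable z P := Integrable.of_bound hz.aestronglyMeasurable K hK
  have hsq := integrable_norm_sq hz hK
  have hinner : ∫ ω, inner ℝ c (z ω) ∂P = inner ℝ c (∫ ω, z ω ∂P) := integral_inner hzi c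
  have hii : Integrable (fun ω => inner ℝ c (z ω)) P := hzi.const_inner c
  have hexp : ∀ w : ℂ, ‖w - c‖ ^ 2 = ‖w‖ ^ 2 - 2 * inner ℝ c w + ‖c‖ ^ 2 := fun w => by
    rw [norm_sub_sq_real, real_inner_comm]
  have hdiff : Integrable (fun ω => ‖z ω‖ ^ 2 - 2 * inner ℝ c (z ω)) P :=
    hsq.sub (hii.const_mul 2)
  simp_rw [hexp]
  rw [integral_add hdiff (integrable_const _),
    integral_sub hsq (hii.const_mul 2), integral_const_mul, hinner]
  simp only [integral_const, probReal_univ, one_smul, cvar]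
  ring

/-- for complex random variables `x_1, …, x_m` with `|x_i| ≤ C` a.s. (`C ≥ 0`),
`Var(x_1 ⋯ x_m) ≤ m C^{2(m−1)} (Var(x_1) + ⋯ + Var(x_m))`. -/
theorem stmt10 {Ω : Type*} [MeasurableSpace Ω] (P : Measure Ω) [IsProbabilityMeasure P]
    (m : ℕ) (C : ℝ) (hC : 0 ≤ C) (x : Fin m → Ω → ℂ)
    (hmeas : ∀ i, Measurable (x i))
    (hbdd : ∀ i, ∀ᵐ ω ∂P, ‖x i ω‖ ≤ C) :
    cvar P (fun ω => ∏ i, x i ω) ≤ (m : ℝ) * C ^ (2 * (m - 1)) * ∑ i, cvar P (x i) := by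
  set μ : Fin m → ℂ := fun i => ∫ ω, x i ω ∂P with hμ
  have hμC : ∀ i, ‖μ i‖ ≤ C := fun i => by
    simpa using norm_integral_le_of_norm_le_const (hbdd i)
  have hall : ∀ᵐ ω ∂P, ∀ i, ‖x i ω‖ ≤ C := ae_all_iff.2 hbdd
  have hprodm : Measurable (fun ω => ∏ i, x i ω) :=
    Finset.measurable_fun_prod _ fun i _ => hmeas i
  have hprodb : ∀ᵐ ω ∂P, ‖∏ i, x i ω‖ ≤ C ^ m := by
    filter_upwards [hall] with ω h
    rw [norm_prod]
    simpa using Finset.prod_le_prod (s := Finset.univ) (fun i _ => norm_nonneg (x i ω))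
      fun i _ => h i
  have hvar : ∀ i, ∫ ω, ‖x i ω - μ i‖ ^ 2 ∂P = cvar P (x i) := fun i => by
    simp [integral_norm_sub_sq (hmeas i) (hbdd i), hμ]
  have hint : ∀ i, Integrable (fun ω => ‖x i ω - μ i‖ ^ 2) P := fun i => by
    refine integrable_norm_sq (K := C + C) ((hmeas i).sub_const _) ?_
    filter_upwards [hbdd i] with ω h
    exact (norm_sub_le _ _).trans (add_le_add h (hμC i))
  calc cvar P (fun ω => ∏ i, x i ω)
      ≤ ∫ ω, ‖∏ i, x i ω - ∏ i, μ i‖ ^ 2 ∂P := by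
        rw [integral_norm_sub_sq hprodm hprodb]
        exact le_add_of_nonneg_right (by positivity)
    _ ≤ ∫ ω, (m : ℝ) * C ^ (2 * (m - 1)) * ∑ i, ‖x i ω - μ i‖ ^ 2 ∂P := by
        refine integral_mono_of_nonneg (Filter.Eventually.of_forall fun ω => by positivity)
          ((integrable_finsetSum _ fun i _ => hint i).const_mul _) ?_
        filter_upwards [hall] with ω h
        have h1 := norm_prod_sub_prod_le_pow Finset.univ C hC (fun i => x i ω) μ h hμC
        have h2 := sq_sum_le_card_mul_sum_sq (s := Finset.univ) (f := fun i => ‖x i ω - μ i‖)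
        simp only [Finset.card_univ, Fintype.card_fin] at h1 h2
        calc ‖∏ i, x i ω - ∏ i, μ i‖ ^ 2
            ≤ (C ^ (m - 1) * ∑ i, ‖x i ω - μ i‖) ^ 2 := by gcongr
          _ = C ^ (2 * (m - 1)) * (∑ i, ‖x i ω - μ i‖) ^ 2 := by ring
          _ ≤ C ^ (2 * (m - 1)) * ((m : ℝ) * ∑ i, ‖x i ω - μ i‖ ^ 2) := by gcongr
          _ = (m : ℝ) * C ^ (2 * (m - 1)) * ∑ i, ‖x i ω - μ i‖ ^ 2 := by ring
    _ = (m : ℝ) * C ^ (2 * (m - 1)) * ∑ i, cvar P (x i) := by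
        rw [integral_const_mul, integral_finsetSum _ fun i _ => hint i]
        simp_rw [hvar]
end

section
/- Let A and B be M×M complex matrices with ‖B‖ ≤ C, and let k ≥ 1 be an integer. Then ‖A^k − B^k − ∑_{m=0}^{k−1} B^m (A − B) B^{k−1−m}‖ ≤ (C + ‖A − B‖)^k − C^k − k C^{k−1} ‖A − B‖. -/
/-!
Write `D = a - b` and `d = ‖D‖`. The remainder `R k = a ^ k - b ^ k - ∑ m < k, b ^ m * D * b ^ (k - 1 - m)`
satisfies `R (k + 1) = R k * b + (a ^ k - b ^ k) * D` and `R 1 = 0`. The claimed bound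
`r k = (C + d) ^ k - C ^ k - k * C ^ (k - 1) * d` satisfies the corresponding scalar recurrence
`r (k + 1) = r k * C + ((C + d) ^ k - C ^ k) * d`, so the result follows by induction from
`‖a ^ k - b ^ k‖ ≤ (C + ‖a - b‖) ^ k - C ^ k`, which is itself an induction. Both inductions
start at `k = 1`, so only submultiplicativity is used and never `‖1‖ ≤ 1`, which fails for the
Frobenius norm when `M ≥ 2`.
-/

/-- Frobenius norm of a matrix: `‖A‖² = ∑_{α,β} |A_{αβ}|²`. -/
noncomputable def frob {M : ℕ} (A : Matrix (Fin M) (Fin M) ℂ) : ℝ :=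
  Real.sqrt (∑ i, ∑ j, ‖A i j‖ ^ 2)

theorem norm_pow_sub_pow_le_aux {R : Type*} [NormedRing R] {a b : R} {C : ℝ}
    (hb : ‖b‖ ≤ C) {k : ℕ} (hk : 1 ≤ k) :
    ‖a ^ k - b ^ k‖ ≤ (C + ‖a - b‖) ^ k - C ^ k := by
  have hC : 0 ≤ C := (norm_nonneg b).trans hb
  have ha : ‖a‖ ≤ C + ‖a - b‖ := by
    calc ‖a‖ = ‖b + (a - b)‖ := by rw [add_sub_cancel]
      _ ≤ ‖b‖ + ‖a - b‖ := norm_add_le _ _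
      _ ≤ _ := by gcongr
  induction k, hk using Nat.le_induction with
  | base => simp
  | succ k hk ih =>
    have hbk : ‖b ^ k‖ ≤ C ^ k :=
      (norm_pow_le' b hk).trans (pow_le_pow_left₀ (norm_nonneg b) hb k)
    calc ‖a ^ (k + 1) - b ^ (k + 1)‖ = ‖(a ^ k - b ^ k) * a + b ^ k * (a - b)‖ := by
          congr 1; noncomm_ring
      _ ≤ ‖a ^ k - b ^ k‖ * ‖a‖ + ‖b ^ k‖ * ‖a - b‖ :=
          (norm_add_le _ _).trans (add_le_add (norm_mul_le _ _) (norm_mul_le _ _))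
      _ ≤ ((C + ‖a - b‖) ^ k - C ^ k) * (C + ‖a - b‖) + C ^ k * ‖a - b‖ :=
          add_le_add (mul_le_mul ih ha (norm_nonneg _) ((norm_nonneg _).trans ih))
            (mul_le_mul_of_nonneg_right hbk (norm_nonneg _))
      _ = _ := by ring

/-- The recurrence `L (k + 1) = L k * b + b ^ k * d` for the first-order term
`L k = ∑ m < k, b ^ m * d * b ^ (k - 1 - m)`. -/
theorem sum_pow_mul_mul_pow_succ {R : Type*} [Ring R] (b d : R) (k : ℕ) :
    ∑ m ∈ Finset.range (k + 1), b ^ m * d * b ^ (k + 1 - 1 - m) =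
      (∑ m ∈ Finset.range k, b ^ m * d * b ^ (k - 1 - m)) * b + b ^ k * d := by
  rw [Finset.sum_range_succ, Finset.sum_mul]
  congr 1
  · refine Finset.sum_congr rfl fun m hm => ?_
    have hm : m < k := Finset.mem_range.mp hm
    rw [mul_assoc _ _ b, ← pow_succ]
    congr 2
    omega
  · simp

theorem norm_pow_sub_pow_sub_sum_le {R : Type*} [NormedRing R] {a b : R} {C : ℝ}
    (hb : ‖b‖ ≤ C) {k : ℕ} (hk : 1 ≤ k) :
    ‖a ^ k - b ^ k - ∑ m ∈ Finset.range k, b ^ m * (a - b) * b ^ (k - 1 - m)‖ ≤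
      (C + ‖a - b‖) ^ k - C ^ k - (k : ℝ) * C ^ (k - 1) * ‖a - b‖ := by
  induction k, hk using Nat.le_induction with
  | base => simp
  | succ k hk ih =>
    rw [sum_pow_mul_mul_pow_succ]
    set L := ∑ m ∈ Finset.range k, b ^ m * (a - b) * b ^ (k - 1 - m)
    calc ‖a ^ (k + 1) - b ^ (k + 1) - (L * b + b ^ k * (a - b))‖
        = ‖(a ^ k - b ^ k - L) * b + (a ^ k - b ^ k) * (a - b)‖ := by
          congr 1; noncomm_ring
      _ ≤ ‖a ^ k - b ^ k - L‖ * ‖b‖ + ‖a ^ k - b ^ k‖ * ‖a - b‖ :=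
          (norm_add_le _ _).trans (add_le_add (norm_mul_le _ _) (norm_mul_le _ _))
      _ ≤ ((C + ‖a - b‖) ^ k - C ^ k - (k : ℝ) * C ^ (k - 1) * ‖a - b‖) * C
            + ((C + ‖a - b‖) ^ k - C ^ k) * ‖a - b‖ :=
          add_le_add (mul_le_mul ih hb (norm_nonneg _) ((norm_nonneg _).trans ih))
            (mul_le_mul_of_nonneg_right (norm_pow_sub_pow_le_aux hb hk) (norm_nonneg _))
      _ = _ := by
          obtain ⟨j, rfl⟩ := Nat.exists_eq_add_of_le' hk
          simp only [Nat.add_sub_cancel]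
          push_cast
          ring

attribute [local instance] Matrix.frobeniusNormedRing in
theorem frob_eq_norm {M : ℕ} (A : Matrix (Fin M) (Fin M) ℂ) : frob A = ‖A‖ := by
  rw [frob, Matrix.frobenius_norm_def, Real.sqrt_eq_rpow]
  simp

/-- for matrices `A, B` with `‖B‖ ≤ C` and an integer `k ≥ 1`,
`‖A^k − B^k − ∑_{m=0}^{k−1} B^m (A − B) B^{k−1−m}‖ ≤ (C + ‖A−B‖)^k − C^k − k C^{k−1} ‖A−B‖`. -/
theorem stmt12 (M : ℕ) (C : ℝ) (hC : 0 ≤ C) (A B : Matrix (Fin M) (Fin M) ℂ)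
    (hB : frob B ≤ C) (k : ℕ) (hk : 1 ≤ k) :
    frob (A ^ k - B ^ k - ∑ m ∈ Finset.range k, B ^ m * (A - B) * B ^ (k - 1 - m)) ≤
      (C + frob (A - B)) ^ k - C ^ k - (k : ℝ) * C ^ (k - 1) * frob (A - B) := by
  let := Matrix.frobeniusNormedRing (m := Fin M) (α := ℂ)
  rw [frob_eq_norm] at hB
  rw [frob_eq_norm, frob_eq_norm]
  exact norm_pow_sub_pow_sub_sum_le hB hk
end
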